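/- Let n ≥ 2 and let q̂ : Fin n → ℕ with q̂_i ≥ 1 for all i, and set d̂ := ∑_i q̂_i. Let A be the multiset of rational numbers A := ⨆_{i=1}^n { j·d̂/q̂_i : j = 0,1,…,q̂_i−1 } (disjoint union over i, counted with multiplicity, d̂ elements in total), let D₀ be the multiset {0,1,…,d̂−1} of d̂ distinct integers (as rationals), and set αs := A − (A ∩ D₀) and βs := D₀ − (A ∩ D₀) (multiset intersection and difference). For an integer b belonging to βs, define p(b) := (the number of elements of αs, with multiplicity, that are < b) − (the number of elements of βs that are < b), an integer. Then: (a) 1 ∈ βs and p(1) = n − 1; (b) d̂ − 1 ∈ βs and p(d̂ − 1) = 1; (c) for every b ∈ βs, 1 ≤ p(b) ≤ n − 1. In particular the maximum p₊ of p equals p(1) = n − 1 and the minimum p₋ of p equals p(d̂−1) = 1. -/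

import Mathlib

/-! Removing the common part `A ∩ D₀` from both multisets does not change a difference of counts, so
for `b ≤ d̂` the integer `p b` is `#{a ∈ A : a < b} - #{a ∈ D₀ : a < b}`. The second count is `b`,
and the elements `j d̂ / q̂ᵢ` (`j < q̂ᵢ`) below `b` number `⌈b q̂ᵢ / d̂⌉`. Since `∑ b q̂ᵢ / d̂ = b`,

  `p b = ∑ᵢ ⌈b q̂ᵢ / d̂⌉ - b = ∑ᵢ (⌈b q̂ᵢ / d̂⌉ - b q̂ᵢ / d̂)`   (`p_eq_sum_ceil`),

a sum of `n` terms in `[0, 1)`; hence `p b ≤ n - 1`. An integer `b` with `0 ≤ b < d̂` is a β-value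
iff it does not lie in `A`, that is, iff no `b q̂ᵢ / d̂` is an integer; then all terms are positive
and `p b ≥ 1`. For `b = 1` and `b = d̂ - 1` the numbers `q̂ᵢ / d̂` and `q̂ᵢ - q̂ᵢ / d̂` lie strictly
between consecutive integers because `q̂ᵢ < d̂` (as `n ≥ 2`), so the ceilings are `1` and `q̂ᵢ`.
-/

/-- The elements `0, d/q, …, (q - 1) d/q` lying below `b ≤ d` number `⌈b q / d⌉`. -/
lemma card_multiples_lt (q d b : ℕ) (hq : 1 ≤ q) (hd : 1 ≤ d) (hb : b ≤ d) :
    (((Multiset.range q).map fun j : ℕ => (j : ℚ) * d / q).filter fun x => x < (b : ℚ)).card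
      = ⌈(b : ℚ) * q / d⌉₊ := by
  have hq' : (0 : ℚ) < q := by exact_mod_cast hq
  have hd' : (0 : ℚ) < d := by exact_mod_cast hd
  have hb' : (b : ℚ) ≤ d := by exact_mod_cast hb
  have hle : ⌈(b : ℚ) * q / d⌉₊ ≤ q := by
    rw [Nat.ceil_le, div_le_iff₀ hd']
    nlinarith
  have hset : (Finset.range q).filter (fun j : ℕ => (j : ℚ) * d / q < b)
      = Finset.range ⌈(b : ℚ) * q / d⌉₊ := by
    ext j
    rw [Finset.mem_filter, Finset.mem_range, Finset.mem_range, Nat.lt_ceil, div_lt_iff₀ hq',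
      lt_div_iff₀ hd', and_iff_right_iff_imp]
    intro h
    exact (Nat.lt_ceil.2 ((lt_div_iff₀ hd').2 h)).trans_le hle
  rw [Multiset.filter_map, Multiset.card_map]
  have := congrArg Finset.card hset
  rw [Finset.card_range] at this
  exact this

lemma card_range_lt (d b : ℕ) (hb : b ≤ d) :
    (((Multiset.range d).map fun j : ℕ => (j : ℚ)).filter fun x => x < (b : ℚ)).card = b := by
  have hset : (Finset.range d).filter (fun j : ℕ => (j : ℚ) < b) = Finset.range b := by
    ext j
    simp only [Finset.mem_filter, Finset.mem_range, Nat.cast_lt]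
    omega
  rw [Multiset.filter_map, Multiset.card_map]
  have := congrArg Finset.card hset
  rw [Finset.card_range] at this
  exact this

/-- Cancelling the common part of two multisets leaves differences of counts unchanged. -/
lemma card_filter_sub_inter (A D : Multiset ℚ) (P : ℚ → Prop) [DecidablePred P] :
    (((A - A ∩ D).filter P).card : ℤ) - (((D - A ∩ D).filter P).card : ℤ)
      = ((A.filter P).card : ℤ) - ((D.filter P).card : ℤ) := by
  have h1 : (A - A ∩ D) + A ∩ D = A := tsub_add_cancel_of_le Multiset.inter_le_left
  have h2 : (D - A ∩ D) + A ∩ D = D := tsub_add_cancel_of_le Multiset.inter_le_right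
  have h3 := congrArg (fun s => (s.filter P).card) h1
  have h4 := congrArg (fun s => (s.filter P).card) h2
  simp only [Multiset.filter_add, Multiset.card_add] at h3 h4
  omega

/-- The closed formula `p b = ∑ᵢ ⌈b q̂ᵢ / d̂⌉ - b`, for counts over `A` and `D₀` before the common
part is removed. -/
lemma p_eq_sum_ceil (n : ℕ) (q : Fin n → ℕ) (hq : ∀ i, 1 ≤ q i) (d : ℕ) (hd : 1 ≤ d)
    (b : ℕ) (hb : b ≤ d) :
    (((((Finset.univ : Finset (Fin n)).val.bind fun i =>
        (Multiset.range (q i)).map fun j : ℕ => (j : ℚ) * d / q i).filter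
          fun x => x < (b : ℚ)).card : ℤ)
      - ((((Multiset.range d).map fun j : ℕ => (j : ℚ)).filter fun x => x < (b : ℚ)).card : ℤ))
      = ∑ i, (⌈(b : ℚ) * q i / d⌉₊ : ℤ) - b := by
  rw [card_range_lt d b hb, Multiset.filter_bind, Multiset.card_bind, ← Nat.cast_sum]
  congr 2
  exact Finset.sum_congr rfl fun i _ => card_multiples_lt (q i) d b (hq i) hd hb

/-- An integer `0 ≤ b < d` lies in `{j d / q : 0 ≤ j < q}` iff `d ∣ b q`. -/
lemma mem_multiples_iff (q d b : ℕ) (hq : 1 ≤ q) (hb : b < d) :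
    (b : ℚ) ∈ ((Multiset.range q).map fun j : ℕ => (j : ℚ) * d / q) ↔ d ∣ b * q := by
  have hq' : (q : ℚ) ≠ 0 := by positivity
  simp only [Multiset.mem_map, Multiset.mem_range]
  constructor
  · rintro ⟨j, -, h⟩
    rw [div_eq_iff hq'] at h
    exact ⟨j, by rw [mul_comm d]; exact_mod_cast h.symm⟩
  · rintro ⟨j, h⟩
    refine ⟨j, ?_, ?_⟩
    · by_contra! hj
      nlinarith [Nat.mul_le_mul_left d hj]
    · rw [div_eq_iff hq', mul_comm (j : ℚ)]
      exact_mod_cast h.symm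

/-- A multiset of naturals, coerced to rationals by the monad lift, is its image under the cast.
The binders `fun j => (j : ℚ) * …` and `fun b => (b : ℚ)` in the theorem range over such lifts. -/
lemma lift_eq_map_cast (s : Multiset ℕ) :
    (do let a ← s; pure (a : ℚ) : Multiset ℚ) = s.map fun a : ℕ => (a : ℚ) :=
  Multiset.bind_singleton s _

/-- The extreme values of the function `p`: `p(1) = n − 1` is the maximum and
`p(d̂ − 1) = 1` is the minimum, and `1 ≤ p(b) ≤ n − 1` for every β-value `b`. -/
theorem p_max_min (n : ℕ) (hn : 2 ≤ n) (qhat : Fin n → ℕ) (hq : ∀ i, 1 ≤ qhat i)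
    (dhat : ℕ) (hd : dhat = ∑ i, qhat i)
    (A D0 αs βs : Multiset ℚ)
    (hA : A = (Finset.univ : Finset (Fin n)).val.bind fun i =>
        (Multiset.range (qhat i)).map fun j => (j : ℚ) * dhat / qhat i)
    (hD0 : D0 = (Multiset.range dhat).map fun b => (b : ℚ))
    (hαs : αs = A - A ∩ D0) (hβs : βs = D0 - A ∩ D0)
    (p : ℕ → ℤ)
    (hp : ∀ b : ℕ, p b = ((αs.filter fun x => x < (b : ℚ)).card : ℤ)
        - ((βs.filter fun x => x < (b : ℚ)).card : ℤ)) :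
    ((1 : ℚ) ∈ βs ∧ p 1 = (n : ℤ) - 1) ∧
    (((dhat - 1 : ℕ) : ℚ) ∈ βs ∧ p (dhat - 1) = 1) ∧
    (∀ b : ℕ, (b : ℚ) ∈ βs → 1 ≤ p b ∧ p b ≤ (n : ℤ) - 1) := by
  simp only [lift_eq_map_cast, Multiset.map_map, Function.comp_def] at hA hD0
  have hsum : ∑ i, (qhat i : ℚ) = dhat := by rw [hd]; push_cast; rfl
  -- `n ≥ 2` provides an index other than `i`, which contributes at least `1` to `d̂`.
  have hlt : ∀ i, qhat i < dhat := by
    intro i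
    have : Nontrivial (Fin n) := Fin.nontrivial_iff_two_le.2 hn
    obtain ⟨j, hj⟩ := exists_ne i
    have := Finset.add_le_sum (f := qhat) (fun _ _ => Nat.zero_le _)
      (Finset.mem_univ i) (Finset.mem_univ j) hj.symm
    have := hq j
    omega
  have hd2 : 2 ≤ dhat := by
    have h1 := hlt ⟨0, by omega⟩
    have h2 := hq ⟨0, by omega⟩
    omega
  have hd0 : (0 : ℚ) < dhat := by exact_mod_cast (by omega : 0 < dhat)
  have hpb : ∀ b : ℕ, b ≤ dhat → p b = ∑ i, (⌈(b : ℚ) * qhat i / dhat⌉₊ : ℤ) - b := by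
    intro b hb
    rw [hp, hαs, hβs, card_filter_sub_inter, hA, hD0]
    exact p_eq_sum_ceil n qhat hq dhat (by omega) b hb
  have hmem : ∀ b : ℕ, (b : ℚ) ∈ βs ↔ b < dhat ∧ ∀ i, ¬ dhat ∣ b * qhat i := by
    intro b
    have hnd : D0.Nodup := by
      rw [hD0]
      exact (Multiset.nodup_range dhat).map Nat.cast_injective
    have hbD : (b : ℚ) ∈ D0 ↔ b < dhat := by simp [hD0]
    rw [hβs, Multiset.mem_sub_of_nodup hnd, Multiset.mem_inter, hbD]
    refine and_congr_right fun hb => ?_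
    have hbA : (b : ℚ) ∈ A ↔ ∃ i, dhat ∣ b * qhat i := by
      rw [hA, Multiset.mem_bind]
      refine exists_congr fun i => ?_
      rw [mem_multiples_iff (qhat i) dhat b (hq i) hb]
      exact and_iff_right (Finset.mem_univ i)
    simp [hbA, hb]
  have hfrac : ∀ b : ℕ, ∑ i, (b : ℚ) * qhat i / dhat = b := by
    intro b
    rw [← Finset.sum_div, ← Finset.mul_sum, hsum, mul_div_cancel_right₀ _ hd0.ne']
  have hne : (Finset.univ : Finset (Fin n)).Nonempty := ⟨⟨0, by omega⟩, Finset.mem_univ _⟩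
  refine ⟨⟨?_, ?_⟩, ⟨?_, ?_⟩, ?_⟩
  · rw [← Nat.cast_one, hmem]
    refine ⟨by omega, fun i h => ?_⟩
    rw [one_mul] at h
    exact absurd (Nat.le_of_dvd (hq i) h) (by have := hlt i; omega)
  · have hc : ∀ i, ⌈((1 : ℕ) : ℚ) * qhat i / dhat⌉₊ = 1 := by
      intro i
      have h1 : (0 : ℚ) < qhat i := by exact_mod_cast hq i
      have h2 : (qhat i : ℚ) < dhat := by exact_mod_cast hlt i
      rw [Nat.ceil_eq_iff one_ne_zero, Nat.cast_one, one_mul]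
      refine ⟨?_, ?_⟩
      · simpa using div_pos h1 hd0
      · rw [div_le_one hd0]
        exact h2.le
    rw [hpb 1 (by omega)]
    simp only [hc]
    simp
  · rw [hmem]
    refine ⟨by omega, fun i h => ?_⟩
    have h2 : (dhat - 1) * qhat i + qhat i = dhat * qhat i := by
      rw [← Nat.succ_mul, Nat.succ_eq_add_one, Nat.sub_add_cancel (by omega)]
    have h3 : dhat ∣ qhat i := (Nat.dvd_add_right h).1 (h2 ▸ dvd_mul_right _ _)
    exact absurd (Nat.le_of_dvd (hq i) h3) (by have := hlt i; omega)
  · have hc : ∀ i, ⌈((dhat - 1 : ℕ) : ℚ) * qhat i / dhat⌉₊ = qhat i := by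
      intro i
      have h1 : (0 : ℚ) < qhat i := by exact_mod_cast hq i
      have h2 : (qhat i : ℚ) < dhat := by exact_mod_cast hlt i
      have h3 := hq i
      rw [Nat.ceil_eq_iff (by omega), Nat.cast_sub h3, Nat.cast_sub (by omega : 1 ≤ dhat),
        lt_div_iff₀ hd0, div_le_iff₀ hd0]
      push_cast
      constructor <;> nlinarith
    rw [hpb _ (by omega)]
    simp only [hc]
    rw [← Nat.cast_sum, ← hd]
    omega
  · intro b hb
    obtain ⟨hbd, hnd⟩ := (hmem b).1 hb
    rw [hpb b hbd.le]
    have hlow : ∀ i, (b : ℚ) * qhat i / dhat < ⌈(b : ℚ) * qhat i / dhat⌉₊ := by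
      intro i
      refine lt_of_le_of_ne (Nat.le_ceil _) fun h => hnd i ?_
      rw [div_eq_iff hd0.ne'] at h
      exact ⟨⌈(b : ℚ) * qhat i / dhat⌉₊, by rw [mul_comm dhat]; exact_mod_cast h⟩
    have hup : ∀ i, (⌈(b : ℚ) * qhat i / dhat⌉₊ : ℚ) < (b : ℚ) * qhat i / dhat + 1 :=
      fun i => Nat.ceil_lt_add_one (by positivity)
    have h1 := Finset.sum_lt_sum_of_nonempty hne fun i _ => hlow i
    have h2 := Finset.sum_lt_sum_of_nonempty hne fun i _ => hup i
    rw [Finset.sum_add_distrib, hfrac] at h2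
    rw [hfrac] at h1
    simp only [Finset.sum_const, Finset.card_univ, Fintype.card_fin, nsmul_eq_mul, mul_one] at h2
    have h1' : b < ∑ i, ⌈(b : ℚ) * qhat i / dhat⌉₊ := by exact_mod_cast h1
    have h2' : ∑ i, ⌈(b : ℚ) * qhat i / dhat⌉₊ < b + n := by exact_mod_cast h2
    rw [← Nat.cast_sum]
    omega
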